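/- Let d ≥ 1 and let n ≥ 1 be a multiple of 4. Let A be a symmetric positive definite d×d real matrix, let p ∈ [1,2], and let q = p/(p−1) (with q = ∞ when p = 1). Consider the unconstrained mirror descent (dual averaging) iterates with distance generating function h_A(θ) = (1/2)⟨θ, Aθ⟩ on linear losses: θ₁ = 0 and θ_{i+1} = θ_i − A⁻¹ g_i. Then there exist vectors g₁,…,gₙ ∈ ℝ^d with ‖g_i‖_q ≤ 1 for all i, and a point θ ∈ ℝ^d with ‖θ‖_p ≤ 1, such that Σ_{i=1}^n ⟨g_i, θ_i − θ⟩ ≥ (1/2) · min{ n/2, √(2n) · d^{1/2−1/q} }. -/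

import Mathlib

/-!
Write `B = A⁻¹`, `S = ∑ gᵢ`. Since `B` is symmetric, telescoping `⟨S_k, B S_k⟩` shows that the regret
against `θ` equals `½ ∑ ⟨gᵢ, B gᵢ⟩ - ½ ⟨S, B S⟩ - ⟨S, θ⟩` (`sum_dot_partial`).

Let `β = tr B / d`. Some diagonal entry satisfies `B_{jj} ≤ β`, and some sign vector `ε` satisfies
`⟨ε, B ε⟩ ≥ tr B` (`exists_signs`). The adversary plays `s e_j` during the first `n/2` rounds and
`± d^{-1/q} ε` with alternating signs during the last `n/2` rounds, which is possible without
changing the total `S` because `n/2` is even. With `θ = -e_j` and `k = s n/2`, the regret is at least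
`(n/4) d^{1-2/q} β + k - k² β / 2`. The number `k` may be chosen freely in `[0, n/2]`:
* if `1/β ≤ n/2`, take `k = 1/β`; by AM-GM the bound is at least `½ √(2n) d^{1/2-1/q}`;
* otherwise take `k = n/2`; the bound is at least `n/2 - n/4 = n/4`.
-/

open Finset

/-- The ℓ_{q} norm where `q = p/(p-1)`, with `q = ∞` (sup norm) when `p = 1`. -/
noncomputable def dualLpNorm (d : ℕ) (p : ℝ) (g : Fin d → ℝ) : ℝ :=
  if p = 1 then sSup (Set.range fun j => |g j|)
  else (∑ j, |g j| ^ (p / (p - 1))) ^ ((p - 1) / p)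

/-- Iterates of unconstrained mirror descent (dual averaging) with distance
generating function `h_A(θ) = ⟨θ, Aθ⟩/2` on linear losses:
`θ₁ = 0` and `θ_{i+1} = θ_i - A⁻¹ gᵢ`. -/
noncomputable def mdIter (d n : ℕ) (A : Matrix (Fin d) (Fin d) ℝ)
    (g : Fin n → Fin d → ℝ) (i : Fin n) : Fin d → ℝ :=
  -(A⁻¹.mulVec (∑ l ∈ Finset.univ.filter (fun l : Fin n => l.val < i.val), g l))

/-- Signs are chosen one coordinate at a time, so that each new cross term is nonnegative. -/
lemma exists_signs {d : ℕ} (B : Matrix (Fin d) (Fin d) ℝ) :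
    ∃ ε : Fin d → ℝ, (∀ i, |ε i| = 1) ∧ B.trace ≤ ε ⬝ᵥ B.mulVec ε := by
  have key : ∀ s : Finset (Fin d), ∃ ε : Fin d → ℝ, (∀ i, |ε i| = 1) ∧
      ∑ i ∈ s, B i i ≤ ∑ i ∈ s, ∑ j ∈ s, ε i * (B i j * ε j) := by
    intro s
    induction s using Finset.induction_on with
    | empty => exact ⟨fun _ => 1, by simp, by simp⟩
    | insert a s ha ih =>
      obtain ⟨ε, hε, h⟩ := ih
      obtain ⟨x, hx, hx'⟩ : ∃ x : ℝ, |x| = 1 ∧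
          0 ≤ x * (∑ j ∈ s, B a j * ε j + ∑ i ∈ s, ε i * B i a) := by
        rcases le_total 0 (∑ j ∈ s, B a j * ε j + ∑ i ∈ s, ε i * B i a) with h0 | h0
        · exact ⟨1, by simp, by simpa using h0⟩
        · exact ⟨-1, by simp, by linarith⟩
      refine ⟨Function.update ε a x, ?_, ?_⟩
      · intro i
        by_cases hi : i = a
        · subst hi; simpa using hx
        · simpa [hi] using hε i
      · have hne : ∀ i ∈ s, Function.update ε a x i = ε i := fun i hi =>
          Function.update_of_ne (ne_of_mem_of_not_mem hi ha) _ _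
        have hxx : x * x = 1 := by rw [← abs_mul_abs_self, hx]; norm_num
        have e1 : ∑ j ∈ s, x * (B a j * Function.update ε a x j) =
            x * ∑ j ∈ s, B a j * ε j := by
          rw [Finset.mul_sum]
          exact Finset.sum_congr rfl fun j hj => by rw [hne j hj]
        have e2 : ∑ i ∈ s, Function.update ε a x i * (B i a * x) =
            x * ∑ i ∈ s, ε i * B i a := by
          rw [Finset.mul_sum]
          exact Finset.sum_congr rfl fun j hj => by rw [hne j hj]; ring
        have e3 : ∑ i ∈ s, ∑ j ∈ s, Function.update ε a x i * (B i j * Function.update ε a x j) =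
            ∑ i ∈ s, ∑ j ∈ s, ε i * (B i j * ε j) :=
          Finset.sum_congr rfl fun i hi => Finset.sum_congr rfl fun j hj => by
            rw [hne j hj, hne i hi]
        simp only [Finset.sum_insert ha, Finset.sum_add_distrib, Function.update_self]
        rw [e1, e2, e3]
        have e4 : x * (B a a * x) = B a a := by linear_combination B a a * hxx
        rw [e4]
        linarith
  obtain ⟨ε, h1, h2⟩ := key Finset.univ
  refine ⟨ε, h1, ?_⟩
  simpa [Matrix.trace, dotProduct, Matrix.mulVec, Finset.mul_sum] using h2

lemma sum_dot_partial {d : ℕ} (B : Matrix (Fin d) (Fin d) ℝ) (hB : B.transpose = B)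
    (G : ℕ → Fin d → ℝ) (n : ℕ) :
    ∑ i ∈ range n, G i ⬝ᵥ B.mulVec (∑ l ∈ range i, G l) =
      (1 / 2) * ((∑ l ∈ range n, G l) ⬝ᵥ B.mulVec (∑ l ∈ range n, G l)) -
      (1 / 2) * ∑ i ∈ range n, G i ⬝ᵥ B.mulVec (G i) := by
  induction n with
  | zero => simp
  | succ n ih =>
    rw [Finset.sum_range_succ, ih, Finset.sum_range_succ G, Finset.sum_range_succ _ n]
    set S := ∑ l ∈ range n, G l
    have hs : S ⬝ᵥ B.mulVec (G n) = G n ⬝ᵥ B.mulVec S := by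
      rw [Matrix.dotProduct_mulVec, ← Matrix.mulVec_transpose, hB, dotProduct_comm]
    simp only [Matrix.mulVec_add, add_dotProduct, dotProduct_add, hs]
    ring

lemma dualLpNorm_le_one {d : ℕ} {p : ℝ} (hp1 : 1 ≤ p) (g : Fin d → ℝ)
    (h1 : p = 1 → ∀ j, |g j| ≤ 1)
    (h2 : 1 < p → ∑ j, |g j| ^ (p / (p - 1)) ≤ 1) : dualLpNorm d p g ≤ 1 := by
  unfold dualLpNorm
  split_ifs with h
  · refine Real.sSup_le ?_ zero_le_one
    rintro _ ⟨j, rfl⟩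
    exact h1 h j
  · have hp : 1 < p := lt_of_le_of_ne hp1 (Ne.symm h)
    exact Real.rpow_le_one (by positivity) (h2 hp) (div_nonneg (by linarith) (by linarith))

lemma dualLpNorm_single_le_one {d : ℕ} {p : ℝ} (hp1 : 1 ≤ p) (j : Fin d) {s : ℝ}
    (hs0 : 0 ≤ s) (hs1 : s ≤ 1) : dualLpNorm d p (Pi.single j s) ≤ 1 := by
  refine dualLpNorm_le_one hp1 _ ?_ ?_
  · intro _ i
    by_cases hi : i = j
    · subst hi; simpa [abs_of_nonneg hs0] using hs1
    · simp [hi]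
  · intro hp
    have hq : 0 < p / (p - 1) := div_pos (by linarith) (by linarith)
    rw [Finset.sum_eq_single j]
    · simpa [abs_of_nonneg hs0] using Real.rpow_le_one hs0 hs1 hq.le
    · intro i _ hi
      simp [hi, Real.zero_rpow hq.ne']
    · simp

lemma dualLpNorm_const_le_one {d : ℕ} (hd : 1 ≤ d) {p : ℝ} (hp1 : 1 ≤ p) (g : Fin d → ℝ)
    (hg : ∀ j, |g j| = (d : ℝ) ^ (-((p - 1) / p))) : dualLpNorm d p g ≤ 1 := by
  have hd0 : (0 : ℝ) < d := by exact_mod_cast hd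
  refine dualLpNorm_le_one hp1 _ ?_ ?_
  · intro h i
    simp [hg, h]
  · intro hp
    have : -((p - 1) / p) * (p / (p - 1)) = -1 := by
      have : p - 1 ≠ 0 := by linarith
      have : p ≠ 0 := by linarith
      field_simp
    simp only [hg, ← Real.rpow_mul hd0.le, this, Finset.sum_const, Finset.card_univ,
      Fintype.card_fin, nsmul_eq_mul, Real.rpow_neg_one]
    rw [mul_inv_cancel₀ hd0.ne']

lemma sum_alternating {d : ℕ} (v : Fin d → ℝ) (a m : ℕ) :
    ∑ l ∈ range (2 * m), ((-1 : ℝ) ^ (a + l)) • v = 0 := by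
  induction m with
  | zero => simp
  | succ m ih =>
    rw [show 2 * (m + 1) = 2 * m + 1 + 1 by ring, Finset.sum_range_succ, Finset.sum_range_succ, ih,
      ← add_assoc, pow_succ]
    simp

/-- The adversary's gradients: `s e_j` for `2m` rounds, then `± v` alternating. -/
noncomputable def advGrad {d : ℕ} (m : ℕ) (j : Fin d) (s : ℝ) (v : Fin d → ℝ) (l : ℕ) :
    Fin d → ℝ :=
  if l < 2 * m then Pi.single j s else ((-1 : ℝ) ^ l) • v

lemma sum_advGrad {d : ℕ} (m : ℕ) (j : Fin d) (s : ℝ) (v : Fin d → ℝ) :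
    ∑ l ∈ range (4 * m), advGrad m j s v l = Pi.single j (2 * m * s) := by
  rw [show 4 * m = 2 * m + 2 * m by ring, Finset.sum_range_add]
  have h1 : ∀ l ∈ range (2 * m), advGrad m j s v l = Pi.single j s := fun l hl => by
    simp [advGrad, Finset.mem_range.1 hl]
  have h2 : ∀ l ∈ range (2 * m), advGrad m j s v (2 * m + l) = ((-1 : ℝ) ^ (2 * m + l)) • v :=
    fun l _ => by simp [advGrad]
  rw [Finset.sum_congr rfl h1, Finset.sum_congr rfl h2, sum_alternating]
  ext i
  by_cases hi : i = j
  · subst hi; simp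
  · simp [hi]

lemma sum_quad_advGrad {d : ℕ} (B : Matrix (Fin d) (Fin d) ℝ) (m : ℕ) (j : Fin d) (s : ℝ)
    (v : Fin d → ℝ) :
    ∑ l ∈ range (4 * m), advGrad m j s v l ⬝ᵥ B.mulVec (advGrad m j s v l) =
      2 * m * (s ^ 2 * B j j) + 2 * m * (v ⬝ᵥ B.mulVec v) := by
  rw [show 4 * m = 2 * m + 2 * m by ring, Finset.sum_range_add]
  have h1 : ∀ l ∈ range (2 * m), advGrad m j s v l ⬝ᵥ B.mulVec (advGrad m j s v l) =
      s ^ 2 * B j j := fun l hl => by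
    simp [advGrad, Finset.mem_range.1 hl]
    ring
  have h2 : ∀ l ∈ range (2 * m), advGrad m j s v (2 * m + l) ⬝ᵥ
      B.mulVec (advGrad m j s v (2 * m + l)) = v ⬝ᵥ B.mulVec v := fun l _ => by
    have : ((-1 : ℝ) ^ (2 * m + l)) * (-1 : ℝ) ^ (2 * m + l) = 1 := by
      rw [← mul_pow]; simp
    simp only [advGrad, show ¬ (2 * m + l < 2 * m) by omega, if_false, Matrix.mulVec_smul,
      dotProduct_smul, smul_dotProduct, smul_eq_mul]
    rw [← mul_assoc, this, one_mul]
  rw [Finset.sum_congr rfl h1, Finset.sum_congr rfl h2]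
  simp

lemma regret_eq {d n : ℕ} (A : Matrix (Fin d) (Fin d) ℝ) (hB : A⁻¹.transpose = A⁻¹)
    (G : ℕ → Fin d → ℝ) (θ : Fin d → ℝ) :
    ∑ i : Fin n, ∑ j, G i j * (mdIter d n A (fun l => G l) i j - θ j) =
      (1 / 2) * ∑ i ∈ range n, G i ⬝ᵥ A⁻¹.mulVec (G i) -
      (1 / 2) * ((∑ l ∈ range n, G l) ⬝ᵥ A⁻¹.mulVec (∑ l ∈ range n, G l)) -
      (∑ l ∈ range n, G l) ⬝ᵥ θ := by
  have h1 : ∀ i : Fin n, mdIter d n A (fun l => G l) i =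
      -(A⁻¹.mulVec (∑ l ∈ range i, G l)) := by
    intro i
    unfold mdIter
    congr 2
    refine Finset.sum_bij (fun l _ => l.val) ?_ ?_ ?_ ?_
    · intro l hl
      simpa using hl
    · intro a _ b _ h
      exact Fin.ext h
    · intro b hb
      have hb' : b < i.val := by simpa using hb
      exact ⟨⟨b, hb'.trans i.2⟩, Finset.mem_filter.2 ⟨Finset.mem_univ _, hb'⟩, rfl⟩
    · intro l _; rfl
  have h2 : ∀ i : Fin n, ∑ j, G i j * (mdIter d n A (fun l => G l) i j - θ j) =
      -(G i ⬝ᵥ A⁻¹.mulVec (∑ l ∈ range i, G l)) - G i ⬝ᵥ θ := by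
    intro i
    rw [h1, ← dotProduct_neg, ← dotProduct_sub]
    rfl
  simp only [h2]
  rw [Fin.sum_univ_eq_sum_range
    (fun i => -(G i ⬝ᵥ A⁻¹.mulVec (∑ l ∈ range i, G l)) - G i ⬝ᵥ θ) n,
    Finset.sum_sub_distrib, Finset.sum_neg_distrib, sum_dot_partial _ hB, sum_dotProduct (range n) G θ]
  ring

/-- The optimisation over the drift `k = 2ms`. Here `w = d^{1/2-1/q}` and `β = tr B / d`. -/
lemma exists_drift {m : ℕ} (hm : 1 ≤ m) {β w : ℝ} (hβ : 0 < β) :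
    ∃ s : ℝ, 0 ≤ s ∧ s ≤ 1 ∧
      (1 / 2) * min (((4 * m : ℕ) : ℝ) / 2) (√(2 * (4 * m : ℕ)) * w) ≤
        m * (w ^ 2 * β) + 2 * m * s - (2 * m * s) ^ 2 * β / 2 := by
  have hm0 : (0 : ℝ) < m := by exact_mod_cast hm
  push_cast
  rcases le_total (1 / β) (2 * m) with h | h
  · refine ⟨1 / β / (2 * m), by positivity, (div_le_one (by positivity)).2 h, ?_⟩
    have hr : √(2 * (4 * m : ℝ)) ^ 2 = 2 * (4 * m) := Real.sq_sqrt (by positivity)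
    set r := √(2 * (4 * m : ℝ))
    have hk : 2 * (m : ℝ) * (1 / β / (2 * m)) = 1 / β := by field_simp
    rw [hk]
    refine (mul_le_mul_of_nonneg_left (min_le_right _ _) (by norm_num)).trans ?_
    have hm8 : (m : ℝ) = r ^ 2 / 8 := by linarith
    rw [hm8]
    have h0 : 0 ≤ (r * w * β - 2) ^ 2 / (8 * β) := by positivity
    have : r ^ 2 / 8 * (w ^ 2 * β) + 1 / β - (1 / β) ^ 2 * β / 2 - 1 / 2 * (r * w) =
        (r * w * β - 2) ^ 2 / (8 * β) := by
      field_simp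
      ring
    linarith
  · refine ⟨1, zero_le_one, le_rfl, ?_⟩
    refine (mul_le_mul_of_nonneg_left (min_le_left _ _) (by norm_num)).trans ?_
    have h1 : 2 * m * β ≤ 1 := (le_div_iff₀ hβ).1 h
    have h2 : 0 ≤ m * (w ^ 2 * β) := by positivity
    nlinarith

theorem statement15 (d n : ℕ) (hd : 1 ≤ d) (hn : 1 ≤ n) (hn4 : 4 ∣ n)
    (A : Matrix (Fin d) (Fin d) ℝ) (hA : A.PosDef)
    (p : ℝ) (hp1 : 1 ≤ p) (hp2 : p ≤ 2) :
    ∃ (g : Fin n → Fin d → ℝ) (θ : Fin d → ℝ),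
      (∀ i, dualLpNorm d p (g i) ≤ 1) ∧
      (∑ j, |θ j| ^ p) ^ (1 / p) ≤ 1 ∧
      (1 / 2) * min ((n : ℝ) / 2)
          (Real.sqrt (2 * n) * (d : ℝ) ^ ((1 : ℝ) / 2 - (p - 1) / p)) ≤
        ∑ i : Fin n, ∑ j, g i j * (mdIter d n A g i j - θ j) := by
  obtain ⟨m, rfl⟩ := hn4
  have hm : 1 ≤ m := by omega
  have hm0 : (0 : ℝ) < m := by exact_mod_cast hm
  have hd0 : (0 : ℝ) < d := by exact_mod_cast hd
  have hp0 : 0 < p := by linarith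
  have : Nonempty (Fin d) := ⟨⟨0, hd⟩⟩
  have hBpd : A⁻¹.PosDef := hA.inv
  have hBt : A⁻¹.transpose = A⁻¹ := by
    have := hBpd.isHermitian.eq
    rwa [Matrix.conjTranspose_eq_transpose_of_trivial] at this
  obtain ⟨ε, hε, htr⟩ := exists_signs A⁻¹
  have htr0 : 0 < A⁻¹.trace := hBpd.trace_pos
  set β := A⁻¹.trace / d with hβ
  have hβ0 : 0 < β := div_pos htr0 hd0
  obtain ⟨j, hj⟩ : ∃ j, A⁻¹ j j ≤ β := by
    by_contra! hcon
    have h := Finset.sum_lt_sum_of_nonempty (Finset.univ_nonempty (α := Fin d))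
      (fun i _ => hcon i)
    have h' : ∑ i, A⁻¹ i i = A⁻¹.trace := rfl
    rw [h', Finset.sum_const, Finset.card_univ, Fintype.card_fin, nsmul_eq_mul, hβ,
      mul_div_cancel₀ _ hd0.ne'] at h
    exact lt_irrefl _ h
  set c : ℝ := (d : ℝ) ^ (-((p - 1) / p)) with hc
  set w : ℝ := (d : ℝ) ^ ((1 : ℝ) / 2 - (p - 1) / p) with hw
  have hwc : w ^ 2 = c ^ 2 * d := by
    rw [hw, hc, ← Real.rpow_natCast, ← Real.rpow_natCast, ← Real.rpow_mul hd0.le,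
      ← Real.rpow_mul hd0.le]
    nth_rewrite 3 [← Real.rpow_one (d : ℝ)]
    rw [← Real.rpow_add hd0]
    congr 1
    push_cast
    ring
  have hc0 : 0 < c := by positivity
  obtain ⟨s, hs0, hs1, hs⟩ := exists_drift hm (w := w) hβ0
  have hjj : 0 < A⁻¹ j j := hBpd.diag_pos
  refine ⟨fun i => advGrad m j s (c • ε) i, Pi.single j (-1), ?_, ?_, ?_⟩
  · intro i
    by_cases hi : (i : ℕ) < 2 * m
    · simpa [advGrad, hi] using dualLpNorm_single_le_one hp1 j hs0 hs1
    · simp only [advGrad, hi, if_false]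
      refine dualLpNorm_const_le_one hd hp1 _ fun k => ?_
      simp [abs_mul, hε, abs_of_pos hc0, ← hc]
  · rw [Finset.sum_eq_single j]
    · simp
    · intro i _ hi
      simp [hi, Real.zero_rpow hp0.ne']
    · simp
  · rw [regret_eq A hBt, sum_advGrad, sum_quad_advGrad]
    refine hs.trans ?_
    have hquad : w ^ 2 * β ≤ (c • ε) ⬝ᵥ A⁻¹.mulVec (c • ε) := by
      have e : w ^ 2 * β = c ^ 2 * A⁻¹.trace := by
        rw [hwc, hβ]; field_simp
      rw [e, Matrix.mulVec_smul, dotProduct_smul, smul_dotProduct, smul_eq_mul, smul_eq_mul,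
        ← mul_assoc, ← sq]
      exact mul_le_mul_of_nonneg_left htr (sq_nonneg c)
    have e1 : (Pi.single j (2 * m * s) : Fin d → ℝ) ⬝ᵥ A⁻¹.mulVec (Pi.single j (2 * m * s)) =
        (2 * m * s) ^ 2 * A⁻¹ j j := by
      simp
      ring
    have e2 : (Pi.single j (2 * m * s) : Fin d → ℝ) ⬝ᵥ Pi.single j (-1) = -(2 * m * s) := by
      simp
    rw [e1, e2]
    have i1 := mul_le_mul_of_nonneg_left hquad hm0.le
    have i2 := mul_le_mul_of_nonneg_left hj (sq_nonneg (2 * m * s))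
    have i3 : 0 ≤ (m : ℝ) * (s ^ 2 * A⁻¹ j j) := by positivity
    linarith
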